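/- For every k with 0 ≤ k ≤ p − 2, if h_{k+1} = h_k − 1 and c(k+1) < 2·h_k − 1, then e_k < e_{k+1}. (Proposition 4.8(iii).) -/

import Mathlib

/-- The shifted h-index of order `k`: the largest `m` with `1 ≤ m ≤ p - k` and
`c (k + m) ≥ m` (the Hirsch h-index of the tail sequence `c (k+1), …, c p`).
Taken as the `sup` of the (finite) set of such `m`, which equals its maximum
when the set is nonempty and is `0` otherwise. -/
def hIdx (p : ℕ) (c : ℕ → ℕ) (k : ℕ) : ℕ :=
  ((Finset.Icc 1 (p - k)).filter (fun m => m ≤ c (k + m))).sup id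

/-- The shifted core sum `N_k = Σ_{j=k+1}^{k+h_k} c j`. -/
def coreSum (p : ℕ) (c : ℕ → ℕ) (k : ℕ) : ℕ :=
  ∑ j ∈ Finset.Icc (k + 1) (k + hIdx p c k), c j

/-- The shifted e-index `e_k = √(N_k − h_k²)`. -/
noncomputable def eIdx (p : ℕ) (c : ℕ → ℕ) (k : ℕ) : ℝ :=
  Real.sqrt ((coreSum p c k : ℝ) - (hIdx p c k : ℝ) ^ 2)

/-!
If passing from `k` to `k + 1` lowers the h-index by one, then the two cores end at the same
position, so `N` drops by exactly `c (k + 1)`, whereas `h²` drops by `2 * h_k - 1`. Hence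
`N - h²` strictly increases as soon as `c (k + 1) < 2 * h_k - 1`. The square root preserves the
strict inequality because every term of the core is at least `h_k`, which gives `N_k ≥ h_k²`.
-/

section ShiftedIndices

theorem hIdx_le_sub (p : ℕ) (c : ℕ → ℕ) (k : ℕ) : hIdx p c k ≤ p - k :=
  Finset.sup_le fun _ hm => (Finset.mem_Icc.1 (Finset.mem_filter.1 hm).1).2

theorem hIdx_le_apply_add_hIdx (p : ℕ) (c : ℕ → ℕ) (k : ℕ) :
    hIdx p c k ≤ c (k + hIdx p c k) := by
  refine Finset.sup_induction (p := fun m => m ≤ c (k + m)) (Nat.zero_le _) ?_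
    fun _ hm => (Finset.mem_filter.1 hm).2
  intro a ha b hb
  rcases max_choice a b with h | h <;> rwa [h]

variable {p : ℕ} {c : ℕ → ℕ} {k : ℕ}

theorem hIdx_le_apply_of_mem_core (hc : AntitoneOn c (Set.Icc (k + 1) p)) {j : ℕ}
    (hj : j ∈ Finset.Icc (k + 1) (k + hIdx p c k)) : hIdx p c k ≤ c j := by
  obtain ⟨hkj, hjh⟩ := Finset.mem_Icc.1 hj
  have hle : k + hIdx p c k ≤ p := by
    have := hIdx_le_sub p c k
    omega
  exact (hIdx_le_apply_add_hIdx p c k).trans (hc ⟨hkj, hjh.trans hle⟩ ⟨hkj.trans hjh, hle⟩ hjh)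

theorem sq_hIdx_le_coreSum (hc : AntitoneOn c (Set.Icc (k + 1) p)) :
    hIdx p c k ^ 2 ≤ coreSum p c k :=
  calc hIdx p c k ^ 2
      = (Finset.Icc (k + 1) (k + hIdx p c k)).card • hIdx p c k := by
        rw [Nat.card_Icc, smul_eq_mul, sq, Nat.add_right_comm, Nat.add_sub_cancel_left]
    _ ≤ coreSum p c k :=
        Finset.card_nsmul_le_sum _ _ _ fun _ hj => hIdx_le_apply_of_mem_core hc hj

theorem coreSum_eq_add_coreSum_succ (h : hIdx p c k = hIdx p c (k + 1) + 1) :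
    coreSum p c k = c (k + 1) + coreSum p c (k + 1) := by
  have hend : k + hIdx p c k = k + 1 + hIdx p c (k + 1) := by omega
  rw [coreSum, coreSum, hend, ← Finset.add_sum_Ioc_eq_sum_Icc (Nat.le_add_right _ _),
    ← Finset.Icc_add_one_left_eq_Ioc]

end ShiftedIndices

theorem stmt_7 (p : ℕ) (hp : 1 ≤ p) (c : ℕ → ℕ)
    (hmono : ∀ i j, 1 ≤ i → i ≤ j → j ≤ p → c j ≤ c i)
    (hpos : ∀ j, 1 ≤ j → j ≤ p → 1 ≤ c j)
    (hzero : ∀ j, p < j → c j = 0)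
    (k : ℕ) (hk : k + 2 ≤ p)
    (hh : hIdx p c (k + 1) = hIdx p c k - 1)
    (hc : c (k + 1) < 2 * hIdx p c k - 1) :
    eIdx p c k < eIdx p c (k + 1) := by
  have hsucc : hIdx p c k = hIdx p c (k + 1) + 1 := by omega
  have hanti : AntitoneOn c (Set.Icc (k + 1) p) := fun i hi j hj hij =>
    hmono i j (le_of_add_le_right hi.1) hij hj.2
  have hsplit : (coreSum p c k : ℝ) = c (k + 1) + coreSum p c (k + 1) :=
    mod_cast coreSum_eq_add_coreSum_succ hsucc
  have hdrop : (c (k + 1) : ℝ) < (hIdx p c k : ℝ) ^ 2 - (hIdx p c (k + 1) : ℝ) ^ 2 := by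
    have hlt : c (k + 1) < 2 * hIdx p c (k + 1) + 1 := by omega
    rw [hsucc]
    push_cast
    linarith [(mod_cast hlt : (c (k + 1) : ℝ) < 2 * hIdx p c (k + 1) + 1)]
  exact Real.sqrt_lt_sqrt (sub_nonneg.2 (mod_cast sq_hIdx_le_coreSum hanti)) (by linarith)
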